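/- arXiv:1303.1063 — 7 statements merged into one kernel-verified Lean document; each statement's English description precedes it below -/
import Mathlib

section
/- Let θ : ℝ³ → ℝ be a smooth function and consider the 1-form α = cos(θ(x,y,z)) dx − sin(θ(x,y,z)) dy on ℝ³. Then its contact coefficient satisfies D(α)(x,y,z) = ∂θ/∂z (x,y,z) at every point; hence α is a contact form if and only if ∂θ/∂z > 0 everywhere. In particular, taking θ(x,y,z) = z, the canonical 1-form cos(z) dx − sin(z) dy has contact coefficient identically 1 and is a contact form. -/
/-- Partial derivative of `f : ℝ³ → ℝ` at `p` in the `i`-th coordinate direction. -/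
noncomputable def pd (i : Fin 3) (f : (Fin 3 → ℝ) → ℝ) (p : Fin 3 → ℝ) : ℝ :=
  fderiv ℝ f p (Pi.single i 1)

/-- The contact coefficient of the 1-form `a dx + b dy + c dz` on ℝ³, i.e. the coefficient
of `α ∧ dα` with respect to `dx ∧ dy ∧ dz`. -/
noncomputable def contactCoeff (a b c : (Fin 3 → ℝ) → ℝ) (p : Fin 3 → ℝ) : ℝ :=
  a p * (pd 1 c p - pd 2 b p) + b p * (pd 2 a p - pd 0 c p) + c p * (pd 0 b p - pd 1 a p)

theorem pd_comp {g : ℝ → ℝ} {g' : ℝ} {f : (Fin 3 → ℝ) → ℝ} {p : Fin 3 → ℝ} (i : Fin 3)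
    (hg : HasDerivAt g g' (f p)) (hf : DifferentiableAt ℝ f p) :
    pd i (fun q => g (f q)) p = g' * pd i f p := by
  have h : HasFDerivAt (fun q => g (f q)) (g' • fderiv ℝ f p) p :=
    hg.comp_hasFDerivAt p hf.hasFDerivAt
  rw [pd, h.fderiv, smul_apply, smul_eq_mul, pd]

theorem pd_coord (i j : Fin 3) (p : Fin 3 → ℝ) :
    pd i (fun q => q j) p = (Pi.single i 1 : Fin 3 → ℝ) j := by
  rw [pd, (hasFDerivAt_apply j p).fderiv, ContinuousLinearMap.proj_apply]

theorem contactCoeff_zero_right (a b : (Fin 3 → ℝ) → ℝ) (p : Fin 3 → ℝ) :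
    contactCoeff a b (fun _ => 0) p = b p * pd 2 a p - a p * pd 2 b p := by
  have hc (i : Fin 3) : pd i (fun _ => 0) p = 0 := by simp [pd]
  rw [contactCoeff, hc, hc]
  ring

theorem contactCoeff_rotating_general {θ : (Fin 3 → ℝ) → ℝ} {p : Fin 3 → ℝ}
    (hθ : DifferentiableAt ℝ θ p) :
    contactCoeff (fun p => Real.cos (θ p)) (fun p => -Real.sin (θ p)) (fun _ => 0) p
      = pd 2 θ p := by
  have hcos : pd 2 (fun p => Real.cos (θ p)) p = -Real.sin (θ p) * pd 2 θ p :=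
    pd_comp 2 (Real.hasDerivAt_cos (θ p)) hθ
  have hsin : pd 2 (fun p => -Real.sin (θ p)) p = -Real.cos (θ p) * pd 2 θ p :=
    pd_comp 2 (Real.hasDerivAt_sin (θ p)).neg hθ
  calc
    _ = -Real.sin (θ p) * (-Real.sin (θ p) * pd 2 θ p)
          - Real.cos (θ p) * (-Real.cos (θ p) * pd 2 θ p) := by
      rw [contactCoeff_zero_right, hcos, hsin]
    _ = (Real.sin (θ p) ^ 2 + Real.cos (θ p) ^ 2) * pd 2 θ p := by ring
    _ = pd 2 θ p := by rw [Real.sin_sq_add_cos_sq, one_mul]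

theorem contactCoeff_cos_sin_coord_two (p : Fin 3 → ℝ) :
    contactCoeff (fun p => Real.cos (p 2)) (fun p => -Real.sin (p 2)) (fun _ => 0) p = 1 := by
  rw [contactCoeff_rotating_general (differentiableAt_apply 2 p), pd_coord, Pi.single_eq_same]

/-- The 1-form `cos θ dx − sin θ dy` on ℝ³ has contact coefficient `∂θ/∂z`; hence it is a
contact form iff `∂θ/∂z > 0` everywhere. In particular, for `θ(x,y,z) = z`, the canonical
1-form `cos z dx − sin z dy` has contact coefficient identically `1` and is a contact form. -/
theorem contactCoeff_rotating (θ : (Fin 3 → ℝ) → ℝ) (hθ : ContDiff ℝ (⊤ : ℕ∞) θ) :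
    (∀ p, contactCoeff (fun p => Real.cos (θ p)) (fun p => -Real.sin (θ p)) (fun _ => 0) p
        = pd 2 θ p) ∧
    ((∀ p, 0 < contactCoeff (fun p => Real.cos (θ p)) (fun p => -Real.sin (θ p))
        (fun _ => 0) p) ↔ (∀ p, 0 < pd 2 θ p)) ∧
    (∀ p, contactCoeff (fun p => Real.cos (p 2)) (fun p => -Real.sin (p 2)) (fun _ => 0) p
        = 1) ∧
    (∀ p, 0 < contactCoeff (fun p => Real.cos (p 2)) (fun p => -Real.sin (p 2))
        (fun _ => 0) p) := by
  have hD (p : Fin 3 → ℝ) := contactCoeff_rotating_general (hθ.differentiable (by simp) p)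
  exact ⟨hD, forall_congr' fun p => by rw [hD], contactCoeff_cos_sin_coord_two,
    fun p => by rw [contactCoeff_cos_sin_coord_two]; exact one_pos⟩
end

section
/- Let s : ℝ → ℝ be the smooth function with s(r) = sin(r)/r for r ≠ 0 and s(0) = 1, and let r(x,y) = √(x² + y²). Then the 1-form α_OT = −y·s(r) dx + x·s(r) dy + cos(r) dz on ℝ³ (i.e. cos(r) dz + r sin(r) dθ in cylindrical coordinates) is smooth and its contact coefficient is strictly positive at every point of ℝ³ (it equals 1 + sin(r)cos(r)/r for r > 0 and 2 at r = 0); in particular α_OT is a contact form. Its kernel ξ_OT is the standard overtwisted contact structure on ℝ³. -/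
/-- The distance to the z-axis. -/
noncomputable def radius (p : Fin 3 → ℝ) : ℝ := Real.sqrt ((p 0) ^ 2 + (p 1) ^ 2)

/-- The entire function `t ↦ cos √t`, continued to negative `t` by its power series. -/
noncomputable def cosSqrt : ℝ → ℝ :=
  FormalMultilinearSeries.ofScalarsSum fun n => (-1 : ℝ) ^ n / (2 * n).factorial

lemma cosSqrt_sq (r : ℝ) : cosSqrt (r ^ 2) = Real.cos r := by
  rw [cosSqrt, FormalMultilinearSeries.ofScalars_sum_eq, Real.cos_eq_tsum]
  refine tsum_congr fun n => ?_
  rw [smul_eq_mul, ← pow_mul, div_mul_eq_mul_div]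

lemma analyticOnNhd_cosSqrt : AnalyticOnNhd ℝ cosSqrt Set.univ := by
  set p := FormalMultilinearSeries.ofScalars ℝ fun n => (-1 : ℝ) ^ n / (2 * n).factorial
  have radius_eq_top : p.radius = ⊤ := by
    refine p.radius_eq_top_of_summable_norm fun r => ?_
    -- The series of absolute values is that of `cosh √r`.
    refine (Real.hasSum_cosh √r).summable.congr fun n => ?_
    rw [FormalMultilinearSeries.ofScalars_norm, pow_mul, Real.sq_sqrt r.coe_nonneg]
    simp [div_eq_inv_mul]
  have hp := p.hasFPowerSeriesOnBall (by simp [radius_eq_top])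
  change AnalyticOnNhd ℝ p.sum Set.univ
  simpa [radius_eq_top] using hp.analyticOnNhd

/-- The entire function `t ↦ sin √t / √t`. It is defined through the derivative of `cosSqrt`, so
that its analyticity is inherited. -/
noncomputable def sincSqrt (t : ℝ) : ℝ := -2 * deriv cosSqrt t

lemma analyticOnNhd_sincSqrt : AnalyticOnNhd ℝ sincSqrt Set.univ :=
  analyticOnNhd_const.mul analyticOnNhd_cosSqrt.deriv

lemma differentiable_sincSqrt : Differentiable ℝ sincSqrt := fun t =>
  (analyticOnNhd_sincSqrt t trivial).differentiableAt

lemma hasDerivAt_cosSqrt (t : ℝ) : HasDerivAt cosSqrt (-sincSqrt t / 2) t := by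
  have deriv_eq : deriv cosSqrt t = -sincSqrt t / 2 := by
    rw [sincSqrt]
    ring
  exact deriv_eq ▸ (analyticOnNhd_cosSqrt t trivial).differentiableAt.hasDerivAt

lemma hasDerivAt_comp_sq {𝕜 : Type*} [NontriviallyNormedField 𝕜] {F : 𝕜 → 𝕜} {F' r : 𝕜}
    (hF : HasDerivAt F F' (r ^ 2)) :
    HasDerivAt (fun x => F (x ^ 2)) (F' * (2 * r)) r := by
  have hsq : HasDerivAt (fun x : 𝕜 => x ^ 2) (2 * r) r := by simpa using hasDerivAt_pow 2 r
  exact HasDerivAt.comp (h := fun x => x ^ 2) r hF hsq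

lemma mul_sinc (r : ℝ) : r * Real.sinc r = Real.sin r := by
  rcases eq_or_ne r 0 with rfl | hr
  · simp
  · rw [Real.sinc_of_ne_zero hr, mul_div_cancel₀ _ hr]

lemma sincSqrt_sq (r : ℝ) : sincSqrt (r ^ 2) = Real.sinc r := by
  have mul_sincSqrt_sq (x : ℝ) : x * sincSqrt (x ^ 2) = Real.sin x := by
    have hcos : HasDerivAt Real.cos (-sincSqrt (x ^ 2) / 2 * (2 * x)) x := by
      simpa only [cosSqrt_sq] using hasDerivAt_comp_sq (hasDerivAt_cosSqrt (x ^ 2))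
    linear_combination -hcos.unique (Real.hasDerivAt_cos x)
  have hcont : Continuous fun x : ℝ => sincSqrt (x ^ 2) :=
    differentiable_sincSqrt.continuous.comp (continuous_pow 2)
  refine congrFun (hcont.ext_on (dense_compl_singleton 0) Real.continuous_sinc fun x hx => ?_) r
  exact mul_left_cancel₀ hx ((mul_sincSqrt_sq x).trans (mul_sinc x).symm)

lemma two_mul_sq_mul_deriv_sincSqrt_sq (r : ℝ) :
    2 * r ^ 2 * deriv sincSqrt (r ^ 2) = Real.cos r - Real.sinc r := by
  have hsinc := hasDerivAt_comp_sq (differentiable_sincSqrt (r ^ 2)).hasDerivAt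
  have hsin := (hasDerivAt_id' r).fun_mul hsinc
  simp only [sincSqrt_sq, mul_sinc] at hsin
  linear_combination hsin.unique (Real.hasDerivAt_sin r)

lemma abs_sinc_lt_one {r : ℝ} (hr : r ≠ 0) : |Real.sinc r| < 1 := by
  rw [Real.sinc_of_ne_zero hr, abs_div, div_lt_one (abs_pos.mpr hr)]
  exact Real.abs_sin_lt_abs hr

lemma one_add_cos_mul_sinc_pos (r : ℝ) : 0 < 1 + Real.cos r * Real.sinc r := by
  rcases eq_or_ne r 0 with rfl | hr
  · norm_num
  · have hlt : |Real.cos r * Real.sinc r| < 1 := by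
      rw [abs_mul]
      exact mul_lt_one_of_nonneg_of_lt_one_right (Real.abs_cos_le_one r) (abs_nonneg _)
        (abs_sinc_lt_one hr)
    linarith [neg_lt_of_abs_lt hlt]

lemma radius_sq (p : Fin 3 → ℝ) : radius p ^ 2 = p 0 ^ 2 + p 1 ^ 2 :=
  Real.sq_sqrt (by positivity)

lemma contDiff_radius_sq {n : WithTop ℕ∞} : ContDiff ℝ n fun p => radius p ^ 2 := by
  simp only [radius_sq]
  fun_prop

lemma contDiff_cos_radius {n : WithTop ℕ∞} : ContDiff ℝ n fun p => Real.cos (radius p) := by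
  simpa only [Function.comp_def, cosSqrt_sq] using
    analyticOnNhd_cosSqrt.contDiff.comp contDiff_radius_sq

lemma contDiff_sinc_radius {n : WithTop ℕ∞} : ContDiff ℝ n fun p => Real.sinc (radius p) := by
  simpa only [Function.comp_def, sincSqrt_sq] using
    analyticOnNhd_sincSqrt.contDiff.comp contDiff_radius_sq

lemma pd_neg (i : Fin 3) (f : (Fin 3 → ℝ) → ℝ) (p : Fin 3 → ℝ) :
    pd i (fun q => -f q) p = -pd i f p := by
  simp [pd, fderiv_fun_neg]

lemma pd_coord_mul (i j : Fin 3) {f : (Fin 3 → ℝ) → ℝ} {p : Fin 3 → ℝ}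
    (hf : DifferentiableAt ℝ f p) :
    pd i (fun q => q j * f q) p = p j * pd i f p + f p * Pi.single (M := fun _ => ℝ) i 1 j := by
  have h := (hasFDerivAt_apply (𝕜 := ℝ) j p).fun_mul hf.hasFDerivAt
  simp [pd, h.fderiv]

lemma hasFDerivAt_radius_sq (p : Fin 3 → ℝ) :
    HasFDerivAt (fun q => radius q ^ 2)
      ((2 * p 0) • ContinuousLinearMap.proj (R := ℝ) (φ := fun _ : Fin 3 => ℝ) 0 +
        (2 * p 1) • ContinuousLinearMap.proj 1) p := by
  have hcoord (i : Fin 3) : HasFDerivAt (fun q : Fin 3 → ℝ => q i)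
      (ContinuousLinearMap.proj (R := ℝ) (φ := fun _ : Fin 3 => ℝ) i) p :=
    hasFDerivAt_apply i p
  simpa [radius_sq] using ((hcoord 0).pow 2).fun_add ((hcoord 1).pow 2)

lemma pd_comp_radius_sq (i : Fin 3) {F : ℝ → ℝ} {F' : ℝ} {p : Fin 3 → ℝ}
    (hF : HasDerivAt F F' (radius p ^ 2)) :
    pd i (fun q => F (radius q ^ 2)) p = F' * (2 * p 0 * Pi.single (M := fun _ => ℝ) i 1 0 +
      2 * p 1 * Pi.single (M := fun _ => ℝ) i 1 1) := by
  have hcomp : HasFDerivAt (fun q => F (radius q ^ 2)) _ p :=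
    hF.comp_hasFDerivAt p (hasFDerivAt_radius_sq p)
  simp [pd, hcomp.fderiv, mul_add]

lemma contactCoeff_radial {S C : ℝ → ℝ} {S' C' : ℝ} {p : Fin 3 → ℝ}
    (hS : HasDerivAt S S' (radius p ^ 2)) (hC : HasDerivAt C C' (radius p ^ 2)) :
    contactCoeff (fun q => -q 1 * S (radius q ^ 2)) (fun q => q 0 * S (radius q ^ 2))
        (fun q => C (radius q ^ 2)) p =
      2 * (C (radius p ^ 2) * (S (radius p ^ 2) + radius p ^ 2 * S') -
        radius p ^ 2 * S (radius p ^ 2) * C') := by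
  have hSd : DifferentiableAt ℝ (fun q => S (radius q ^ 2)) p :=
    hS.differentiableAt.comp p (hasFDerivAt_radius_sq p).differentiableAt
  simp only [contactCoeff, neg_mul, pd_neg, pd_coord_mul _ _ hSd, pd_comp_radius_sq _ hS,
    pd_comp_radius_sq _ hC]
  simp only [Pi.single_eq_same, Pi.single_eq_of_ne, ne_eq, Fin.reduceEq, not_false_eq_true]
  linear_combination (-2 * (C (radius p ^ 2) * S' - S (radius p ^ 2) * C')) * radius_sq p

lemma contactCoeff_sinc_radius_cos_radius (p : Fin 3 → ℝ) :
    contactCoeff (fun q => -q 1 * Real.sinc (radius q)) (fun q => q 0 * Real.sinc (radius q))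
        (fun q => Real.cos (radius q)) p =
      1 + Real.cos (radius p) * Real.sinc (radius p) := by
  set r := radius p with hr
  have hradial := contactCoeff_radial (differentiable_sincSqrt (r ^ 2)).hasDerivAt
    (hasDerivAt_cosSqrt (r ^ 2))
  simp only [sincSqrt_sq, cosSqrt_sq, ← hr] at hradial
  have hpyth : (r * Real.sinc r) ^ 2 + Real.cos r ^ 2 = 1 := by
    rw [mul_sinc, Real.sin_sq_add_cos_sq]
  rw [hradial]
  linear_combination Real.cos r * two_mul_sq_mul_deriv_sincSqrt_sq r + hpyth

/-- The overtwisted 1-form `α_OT = cos r dz + r sin r dθ`, written in Cartesian coordinates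
as `−y·s(r) dx + x·s(r) dy + cos r dz` with `s(r) = sin r / r` (and `s(0) = 1`), is smooth,
has everywhere strictly positive contact coefficient (equal to `1 + sin r cos r / r` for
`r > 0` and to `2` at `r = 0`); in particular it is a contact form. Its kernel is the
standard overtwisted contact structure on ℝ³. -/
theorem contactCoeff_overtwisted (s : ℝ → ℝ) (hs : ContDiff ℝ (⊤ : ℕ∞) s)
    (hs_ne : ∀ r : ℝ, r ≠ 0 → s r = Real.sin r / r) (hs0 : s 0 = 1) :
    ContDiff ℝ (⊤ : ℕ∞) (fun p : Fin 3 → ℝ => -p 1 * s (radius p)) ∧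
    ContDiff ℝ (⊤ : ℕ∞) (fun p : Fin 3 → ℝ => p 0 * s (radius p)) ∧
    ContDiff ℝ (⊤ : ℕ∞) (fun p : Fin 3 → ℝ => Real.cos (radius p)) ∧
    (∀ p : Fin 3 → ℝ,
      0 < contactCoeff (fun p => -p 1 * s (radius p)) (fun p => p 0 * s (radius p))
        (fun p => Real.cos (radius p)) p) ∧
    (∀ p : Fin 3 → ℝ, radius p ≠ 0 →
      contactCoeff (fun p => -p 1 * s (radius p)) (fun p => p 0 * s (radius p))
        (fun p => Real.cos (radius p)) p
      = 1 + Real.sin (radius p) * Real.cos (radius p) / radius p) ∧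
    (∀ p : Fin 3 → ℝ, radius p = 0 →
      contactCoeff (fun p => -p 1 * s (radius p)) (fun p => p 0 * s (radius p))
        (fun p => Real.cos (radius p)) p = 2) := by
  have s_eq_sinc : s = Real.sinc := by
    ext r
    rcases eq_or_ne r 0 with rfl | hr
    · rw [hs0, Real.sinc_zero]
    · rw [hs_ne r hr, Real.sinc_of_ne_zero hr]
  subst s_eq_sinc
  simp only [contactCoeff_sinc_radius_cos_radius]
  refine ⟨(contDiff_apply ℝ ℝ 1).neg.mul contDiff_sinc_radius,
    (contDiff_apply ℝ ℝ 0).mul contDiff_sinc_radius, contDiff_cos_radius,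
    fun p => one_add_cos_mul_sinc_pos (radius p), fun p hp => ?_, fun p hp => ?_⟩
  · rw [hs_ne _ hp]
    ring
  · norm_num [hp]
end

section
/- Let u : ℝ² → ℝ and Y : ℝ² → ℝ² be smooth and satisfy the invariant contact condition u(p)·div Y(p) − du_p(Y(p)) > 0 for all p. Then Y has no periodic orbit along which the divergence of Y vanishes: there is no T > 0 and differentiable γ : ℝ → ℝ² with γ'(t) = Y(γ(t)) for all t, γ(t + T) = γ(t) for all t, and div Y(γ(t)) = 0 for all t. (A ξ-convex surface has no closed leaf of vanishing divergence; in particular degenerate closed leaves obstruct ξ-convexity.) -/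
/-- Partial derivative of `f : ℝ² → ℝ` at `p` in the `i`-th coordinate direction. -/
noncomputable def pd2 (i : Fin 2) (f : (Fin 2 → ℝ) → ℝ) (p : Fin 2 → ℝ) : ℝ :=
  fderiv ℝ f p (Pi.single i 1)

/-- The divergence of a vector field `Y` on ℝ² (with respect to the standard area form). -/
noncomputable def div2 (Y : (Fin 2 → ℝ) → Fin 2 → ℝ) (p : Fin 2 → ℝ) : ℝ :=
  pd2 0 (fun q => Y q 0) p + pd2 1 (fun q => Y q 1) p

/-! Along an orbit of `Y` on which `u · div Y ≤ 0`, the contact condition forces `du(Y) < 0`.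
So `u` strictly decreases along the orbit, which therefore cannot close up. -/

section ClosedOrbit

variable {E : Type*} [NormedAddCommGroup E] [NormedSpace ℝ E]
  {u δ : E → ℝ} {Y : E → E} {γ : ℝ → E} {T : ℝ}

theorem strictAnti_comp_of_fderiv_neg (hγ : IsIntegralCurve γ fun _ => Y)
    (hu : ∀ t, DifferentiableAt ℝ u (γ t)) (hneg : ∀ t, fderiv ℝ u (γ t) (Y (γ t)) < 0) :
    StrictAnti (u ∘ γ) :=
  strictAnti_of_hasDerivAt_neg
    (fun t => (hu t).hasFDerivAt.comp_hasDerivAt t (hγ t)) hneg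

theorem not_periodic_of_fderiv_neg (hγ : IsIntegralCurve γ fun _ => Y)
    (hu : ∀ t, DifferentiableAt ℝ u (γ t)) (hneg : ∀ t, fderiv ℝ u (γ t) (Y (γ t)) < 0)
    (hT : T ≠ 0) : ¬ Function.Periodic γ T := fun hper =>
  (hper.comp u).not_injective hT (strictAnti_comp_of_fderiv_neg hγ hu hneg).injective

/-- `δ` stands for the divergence of `Y` with respect to an arbitrary volume form. -/
theorem no_degenerate_closed_leaf_general (hu : Differentiable ℝ u)
    (hcontact : ∀ p, 0 < u p * δ p - fderiv ℝ u p (Y p)) :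
    ¬ ∃ (T : ℝ) (γ : ℝ → E), T ≠ 0 ∧ IsIntegralCurve γ (fun _ => Y) ∧
        Function.Periodic γ T ∧ ∀ t, u (γ t) * δ (γ t) ≤ 0 := by
  rintro ⟨T, γ, hT, hγ, hper, hδ⟩
  have hneg (t : ℝ) : fderiv ℝ u (γ t) (Y (γ t)) < 0 :=
    (sub_pos.mp (hcontact (γ t))).trans_le (hδ t)
  exact not_periodic_of_fderiv_neg hγ (fun t => hu (γ t)) hneg hT hper

end ClosedOrbit

/-- If `(u, Y)` satisfies the invariant contact condition `u·div Y − du(Y) > 0` (condition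
(†′)), then `Y` has no periodic orbit along which its divergence vanishes: a ξ-convex
surface has no degenerate closed leaf in its characteristic foliation. -/
theorem no_degenerate_closed_leaf (u : (Fin 2 → ℝ) → ℝ) (Y : (Fin 2 → ℝ) → Fin 2 → ℝ)
    (hu : ContDiff ℝ (⊤ : ℕ∞) u) (hY : ContDiff ℝ (⊤ : ℕ∞) Y)
    (hcontact : ∀ p, 0 < u p * div2 Y p - fderiv ℝ u p (Y p)) :
    ¬ ∃ (T : ℝ) (γ : ℝ → Fin 2 → ℝ), 0 < T ∧
        (∀ t, HasDerivAt γ (Y (γ t)) t) ∧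
        (∀ t, γ (t + T) = γ t) ∧
        (∀ t, div2 Y (γ t) = 0) := fun ⟨T, γ, hT, hγ, hper, hdiv⟩ =>
  no_degenerate_closed_leaf_general (hu.differentiable (by simp)) hcontact
    ⟨T, γ, hT.ne', hγ, hper, fun t => (mul_eq_zero_of_right _ (hdiv t)).le⟩
end

section
/- Let u : ℝ² → ℝ and Y : ℝ² → ℝ² be smooth and satisfy the invariant contact condition u(p)·div Y(p) − du_p(Y(p)) > 0 for all p. Let γ : I → ℝ² be a differentiable solution of γ'(t) = Y(γ(t)) on an interval I. If s, t ∈ I with s ≤ t and u(γ(s)) ≤ 0, then u(γ(t)) ≤ 0. In particular no orbit of the characteristic foliation can travel from the region {u < 0} to the region {u > 0}; since positive singularities lie in {u > 0} and negative ones in {u < 0}, a ξ-convex surface has no retrograde connection (no leaf from a negative singularity to a positive one). -/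
section SublevelInvariance

open Set

variable {E : Type*} [NormedAddCommGroup E] [NormedSpace ℝ E] {I : Set ℝ} {c s t : ℝ}

theorem le_of_hasDerivWithinAt_neg_of_eq {f f' : ℝ → ℝ} (hI : I.OrdConnected)
    (hf : ∀ x ∈ I, HasDerivWithinAt f (f' x) I x) (hneg : ∀ x ∈ I, f x = c → f' x < 0)
    (hs : s ∈ I) (ht : t ∈ I) (hst : s ≤ t) (hsc : f s ≤ c) : f t ≤ c := by
  have hsub : Icc s t ⊆ I := hI.out hs ht
  have hcont : ContinuousOn f (Icc s t) :=
    (HasDerivWithinAt.continuousOn hf).mono hsub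
  have hright : ∀ x ∈ Ico s t, HasDerivWithinAt f (f' x) (Ici x) x := fun x hx =>
    have hxI := hsub (Ico_subset_Icc_self hx)
    (hf x hxI).mono_of_mem_nhdsWithin (hI.mem_nhdsGE hxI ht hx.2)
  exact image_le_of_deriv_right_lt_deriv_boundary hcont hright hsc (fun x => hasDerivAt_const x c)
    (fun x hx => hneg x (hsub (Ico_subset_Icc_self hx))) (right_mem_Icc.2 hst)

theorem hasDerivWithinAt_comp_of_isIntegralCurveOn {F : Type*} [NormedAddCommGroup F]
    [NormedSpace ℝ F] {u : E → F} {v : ℝ → E → E} {γ : ℝ → E} (hγ : IsIntegralCurveOn γ v I)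
    (ht : t ∈ I) (hu : DifferentiableAt ℝ u (γ t)) :
    HasDerivWithinAt (u ∘ γ) (fderiv ℝ u (γ t) (v t (γ t))) I t :=
  hu.hasFDerivAt.comp_hasDerivWithinAt t (hγ t ht)

theorem no_retrograde_connection_general {u : E → ℝ} {v : ℝ → E → E} {γ : ℝ → E}
    (hu : Differentiable ℝ u) (hneg : ∀ τ ∈ I, ∀ p, u p = c → fderiv ℝ u p (v τ p) < 0)
    (hI : I.OrdConnected) (hγ : IsIntegralCurveOn γ v I)
    (hs : s ∈ I) (ht : t ∈ I) (hst : s ≤ t) (hsc : u (γ s) ≤ c) : u (γ t) ≤ c :=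
  le_of_hasDerivWithinAt_neg_of_eq (f := u ∘ γ) hI
    (fun τ hτ => hasDerivWithinAt_comp_of_isIntegralCurveOn hγ hτ (hu (γ τ)))
    (fun τ hτ => hneg τ hτ (γ τ)) hs ht hst hsc

end SublevelInvariance

/-- If `(u, Y)` satisfies the invariant contact condition `u·div Y − du(Y) > 0` (condition
(†′)) and `γ` is an orbit of `Y` on an interval `I`, then `u ∘ γ` can never pass from
nonpositive to positive values: no leaf of the characteristic foliation travels from
`{u < 0}` to `{u > 0}`, so a ξ-convex surface has no retrograde connection. -/
theorem no_retrograde_connection (u : (Fin 2 → ℝ) → ℝ) (Y : (Fin 2 → ℝ) → Fin 2 → ℝ)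
    (hu : ContDiff ℝ (⊤ : ℕ∞) u) (hY : ContDiff ℝ (⊤ : ℕ∞) Y)
    (hcontact : ∀ p, 0 < u p * div2 Y p - fderiv ℝ u p (Y p))
    (I : Set ℝ) (hI : I.OrdConnected) (γ : ℝ → Fin 2 → ℝ)
    (hγ : ∀ t ∈ I, HasDerivAt γ (Y (γ t)) t)
    (s t : ℝ) (hs : s ∈ I) (ht : t ∈ I) (hst : s ≤ t)
    (h0 : u (γ s) ≤ 0) :
    u (γ t) ≤ 0 := by
  have hneg : ∀ p, u p = 0 → fderiv ℝ u p (Y p) < 0 := fun p hp => by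
    simpa [hp] using hcontact p
  exact no_retrograde_connection_general (v := fun _ => Y) (hu.differentiable (by simp))
    (fun _ _ => hneg) hI (fun τ hτ => (hγ τ hτ).hasDerivWithinAt) hs ht hst h0
end

section
/- Let a, b, u : ℝ² → ℝ be smooth functions that are ℤ²-periodic (a(p + k) = a(p), b(p + k) = b(p), u(p + k) = u(p) for all p ∈ ℝ² and k ∈ ℤ²). Then the function a·∂u/∂y − b·∂u/∂x vanishes at some point of ℝ². Consequently, if moreover ∂b/∂x = ∂a/∂y (i.e. the 1-form β = a dx + b dy on the torus is closed), then there is no ℤ²-periodic u satisfying the contact condition u·(∂b/∂x − ∂a/∂y) + a·∂u/∂y − b·∂u/∂x > 0 everywhere: a torus whose characteristic foliation is defined by a closed 1-form (a pre-Lagrangian torus) is not ξ-convex. -/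
/-- A function on ℝ² is ℤ²-periodic (i.e. descends to the torus T² = ℝ²/ℤ²). -/
def ZZPeriodic (f : (Fin 2 → ℝ) → ℝ) : Prop :=
  ∀ (p : Fin 2 → ℝ) (k : Fin 2 → ℤ), f (p + fun i => (k i : ℝ)) = f p

section PeriodLattice

open Module Set

theorem periodic_of_mem_span_int {G α : Type*} [AddCommGroup G] {f : G → α} {s : Set G}
    (hf : ∀ v ∈ s, Function.Periodic f v) {v : G} (hv : v ∈ Submodule.span ℤ s) :
    Function.Periodic f v := by
  induction hv using Submodule.span_induction with
  | mem v hv => exact hf v hv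
  | zero => exact fun x => by rw [add_zero]
  | add v w _ _ hv hw => exact hv.add_period hw
  | smul n v _ hv => exact hv.zsmul n

theorem apply_zspan_fract_of_periodic {ι K E α : Type*} [NormedField K] [LinearOrder K]
    [IsStrictOrderedRing K] [FloorRing K] [NormedAddCommGroup E] [NormedSpace K E] [Fintype ι]
    (b : Basis ι K E) {f : E → α} (hf : ∀ i, Function.Periodic f (b i)) (x : E) :
    f (ZSpan.fract b x) = f x :=
  (periodic_of_mem_span_int (forall_mem_range.2 hf) (ZSpan.floor b x).2).sub_eq x

variable {ι E : Type*} [Finite ι] [NormedAddCommGroup E] [NormedSpace ℝ E] (b : Basis ι ℝ E)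

include b

theorem isCompact_range_of_periodic_basis {Y : Type*} [TopologicalSpace Y] {f : E → Y}
    (hf : Continuous f) (hper : ∀ i, Function.Periodic f (b i)) : IsCompact (range f) := by
  have := Fintype.ofFinite ι
  have : FiniteDimensional ℝ E := b.finiteDimensional_of_finite
  have : ProperSpace E := FiniteDimensional.proper_real E
  have hrange : f '' closure (ZSpan.fundamentalDomain b) = range f := by
    refine (image_subset_range _ _).antisymm (range_subset_iff.2 fun x => ?_)
    exact ⟨ZSpan.fract b x, subset_closure (ZSpan.fract_mem_fundamentalDomain b x),
      apply_zspan_fract_of_periodic b hper x⟩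
  exact hrange ▸ (ZSpan.fundamentalDomain_isBounded b).isCompact_closure.image hf

theorem exists_forall_le_of_periodic_basis {α : Type*} [LinearOrder α] [TopologicalSpace α]
    [ClosedIciTopology α] {f : E → α} (hf : Continuous f)
    (hper : ∀ i, Function.Periodic f (b i)) : ∃ x, ∀ y, f y ≤ f x := by
  obtain ⟨_, ⟨x, rfl⟩, hx⟩ :=
    (isCompact_range_of_periodic_basis b hf hper).exists_isGreatest (range_nonempty f)
  exact ⟨x, forall_mem_range.1 hx⟩

theorem exists_hasFDerivAt_zero_of_periodic_basis {f : E → ℝ} (hf : Differentiable ℝ f)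
    (hper : ∀ i, Function.Periodic f (b i)) : ∃ x, HasFDerivAt f (0 : E →L[ℝ] ℝ) x := by
  obtain ⟨x, hx⟩ := exists_forall_le_of_periodic_basis b hf.continuous hper
  have hmax : IsLocalMax f x := Filter.Eventually.of_forall hx
  exact ⟨x, hmax.fderiv_eq_zero ▸ (hf x).hasFDerivAt⟩

end PeriodLattice

theorem ZZPeriodic.periodic_basisFun {f : (Fin 2 → ℝ) → ℝ} (hf : ZZPeriodic f) (i : Fin 2) :
    Function.Periodic f (Pi.basisFun ℝ (Fin 2) i) := by
  intro p
  convert hf p (Pi.single i 1) using 3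
  ext j
  simp [Pi.single_apply]

theorem ZZPeriodic.exists_forall_pd2_eq_zero {u : (Fin 2 → ℝ) → ℝ} (hup : ZZPeriodic u)
    (hu : Differentiable ℝ u) : ∃ p, ∀ i, pd2 i u p = 0 := by
  obtain ⟨p, hp⟩ :=
    exists_hasFDerivAt_zero_of_periodic_basis (Pi.basisFun ℝ (Fin 2)) hu hup.periodic_basisFun
  exact ⟨p, fun i => by rw [pd2, hp.fderiv, zero_apply]⟩

theorem pre_lagrangian_not_convex_general (a b : (Fin 2 → ℝ) → ℝ) {u : (Fin 2 → ℝ) → ℝ}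
    (hu : Differentiable ℝ u) (hup : ZZPeriodic u) :
    (∃ p, a p * pd2 1 u p - b p * pd2 0 u p = 0) ∧
    ((∀ p, pd2 0 b p = pd2 1 a p) →
      ¬ (∀ p, 0 < u p * (pd2 0 b p - pd2 1 a p)
            + a p * pd2 1 u p - b p * pd2 0 u p)) := by
  obtain ⟨p, hp⟩ := hup.exists_forall_pd2_eq_zero hu
  have hwedge : a p * pd2 1 u p - b p * pd2 0 u p = 0 := by simp [hp]
  refine ⟨⟨p, hwedge⟩, fun hclosed hpos => (hpos p).ne' ?_⟩
  rw [hclosed p, sub_self, mul_zero, zero_add, hwedge]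

/-- On the torus, the function `a·∂u/∂y − b·∂u/∂x` must vanish somewhere; consequently if
the 1-form `β = a dx + b dy` is closed (`∂b/∂x = ∂a/∂y`), no ℤ²-periodic `u` satisfies the
invariant contact condition (†) `u dβ + β ∧ du > 0`: a pre-Lagrangian torus, whose
characteristic foliation is defined by a closed 1-form, is not ξ-convex. -/
theorem pre_lagrangian_not_convex (a b u : (Fin 2 → ℝ) → ℝ)
    (ha : ContDiff ℝ (⊤ : ℕ∞) a) (hb : ContDiff ℝ (⊤ : ℕ∞) b) (hu : ContDiff ℝ (⊤ : ℕ∞) u)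
    (hap : ZZPeriodic a) (hbp : ZZPeriodic b) (hup : ZZPeriodic u) :
    (∃ p, a p * pd2 1 u p - b p * pd2 0 u p = 0) ∧
    ((∀ p, pd2 0 b p = pd2 1 a p) →
      ¬ (∀ p, 0 < u p * (pd2 0 b p - pd2 1 a p)
            + a p * pd2 1 u p - b p * pd2 0 u p)) :=
  pre_lagrangian_not_convex_general a b (hu.differentiable (by simp)) hup
end

section
/- Let U ⊆ ℝ² be an open neighborhood of 0 and let Y, Y' : U → ℝ² be smooth vector fields with the same zero set Z = {p ∈ U : Y(p) = 0} = {p ∈ U : Y'(p) = 0}, such that 0 ∈ Z, the divergences div Y and div Y' are nonzero at every point of Z, and on U ∖ Z the fields are positively proportional: for every p ∈ U ∖ Z there is λ(p) > 0 with Y'(p) = λ(p)·Y(p). Then there exist an open neighborhood V ⊆ U of 0 and a smooth function u : V → ℝ with u > 0 on V and Y' = u·Y on V. (Giroux's lemma: two singular foliations with the same leaves and singularities of nonzero divergence are equal.) -/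
open Filter MeasureTheory Set Topology
open scoped Manifold

section

variable {𝕜 E F : Type*} [NontriviallyNormedField 𝕜] [NormedAddCommGroup E] [NormedSpace 𝕜 E]
  [NormedAddCommGroup F] [NormedSpace 𝕜 F]

theorem frequently_ne_of_fderiv_ne_zero {f : E → F} {x : E} (hf : fderiv 𝕜 f x ≠ 0) (c : F) :
    ∃ᶠ y in 𝓝 x, f y ≠ c := by
  intro h
  have hconst : f =ᶠ[𝓝 x] fun _ ↦ c := h.mono fun _ ↦ not_not.1
  exact hf (by simp [hconst.fderiv_eq])

theorem hasFDerivAt_smul_of_eq_zero {c : E → 𝕜} {f : E → F} {f' : E →L[𝕜] F} {x : E}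
    (hc : ContinuousAt c x) (hf : HasFDerivAt f f' x) (hfx : f x = 0) :
    HasFDerivAt (fun y ↦ c y • f y) (c x • f') x := by
  have hO : f =O[𝓝 x] fun y ↦ y - x := by simpa [hfx] using hf.isBigO_sub
  have ho : (fun y ↦ c y - c x) =o[𝓝 x] fun _ ↦ (1 : 𝕜) :=
    (Asymptotics.isLittleO_one_iff 𝕜).2 (by simpa using hc.sub_const (c x))
  have hsmall : HasFDerivAt (fun y ↦ (c y - c x) • f y) (0 : E →L[𝕜] F) x := by
    rw [hasFDerivAt_iff_isLittleO]
    simpa [hfx] using ho.smul_isBigO hO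
  convert hsmall.add (hf.const_smul (c x)) using 1
  · ext y
    simp [sub_smul]
  · rw [zero_add]

end

theorem eventually_contDiffAt_openPartialHomeomorph_symm {𝕜 E F : Type*} [RCLike 𝕜]
    [NormedAddCommGroup E] [NormedSpace 𝕜 E] [CompleteSpace E]
    [NormedAddCommGroup F] [NormedSpace 𝕜 F] {m : WithTop ℕ∞} {x₀ : E}
    (e : OpenPartialHomeomorph E F) {e' : E ≃L[𝕜] F}
    (hx₀ : x₀ ∈ e.source) (he' : HasFDerivAt e (e' : E →L[𝕜] F) x₀) (hm : m ≠ 0)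
    (he : ∀ᶠ x in 𝓝 x₀, ContDiffAt 𝕜 m e x) :
    ∀ᶠ y in 𝓝 (e x₀), ContDiffAt 𝕜 m e.symm y := by
  have hinv : ∀ᶠ x in 𝓝 x₀, fderiv 𝕜 e x ∈ range ((↑) : (E ≃L[𝕜] F) → E →L[𝕜] F) :=
    (he.self_of_nhds.continuousAt_fderiv hm).eventually_mem (he'.fderiv ▸ e'.nhds)
  filter_upwards [e.open_target.mem_nhds (e.map_source hx₀),
    (e.tendsto_symm hx₀).eventually (he.and hinv)] with y hy ⟨hsmooth, ey', hey'⟩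
  exact e.contDiffAt_symm hy (hey' ▸ (hsmooth.differentiableAt hm).hasFDerivAt) hsmooth

section

variable {E G : Type*} [NormedAddCommGroup E] [NormedSpace ℝ E]
  [NormedAddCommGroup G] [NormedSpace ℝ G] {n : ℕ∞} {x₀ : E}

theorem contDiffAt_setIntegral_of_isCompact {T : Type*} [NormedAddCommGroup T] [NormedSpace ℝ T]
    [FiniteDimensional ℝ T] [MeasurableSpace T] [BorelSpace T] {μ : Measure T}
    [IsLocallyFiniteMeasure μ] {g : E × T → G} {K : Set T} (hK : IsCompact K)
    (hg : ∀ t ∈ K, ∀ᶠ z in 𝓝 (x₀, t), ContDiffAt ℝ n g z) :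
    ContDiffAt ℝ n (fun x ↦ ∫ t in K, g (x, t) ∂μ) x₀ := by
  obtain ⟨s, J, hs, hJ, hxs, hKJ, hsJ⟩ := generalized_tube_lemma (isCompact_singleton (x := x₀)) hK
    (isOpen_interior (s := {z | ContDiffAt ℝ n g z})) (by
      rintro ⟨x, t⟩ ⟨rfl, ht⟩
      exact mem_interior_iff_mem_nhds.2 (hg t ht))
  obtain ⟨L, hL, hKL, hLJ⟩ := exists_compact_between hK hJ hKJ
  obtain ⟨χ, hχK, hχL, -⟩ :=
    exists_contMDiffMap_one_nhds_of_subset_interior (n := n) 𝓘(ℝ, T) hK.isClosed hKL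
  have hχg : ContDiffOn ℝ n (fun z : E × T ↦ χ (-z.2) • g (z.1, -z.2)) (s ×ˢ univ) := by
    rintro ⟨x, t⟩ ⟨hx, -⟩
    apply ContDiffAt.contDiffWithinAt
    by_cases ht : -t ∈ L
    · have hgx : ContDiffAt ℝ n g (x, -t) := interior_subset (hsJ (mk_mem_prod hx (hLJ ht)))
      exact (χ.contMDiff.contDiff.comp contDiff_snd.neg).contDiffAt.smul
        (hgx.comp (x, t) (contDiff_fst.prodMk contDiff_snd.neg).contDiffAt)
    · refine (contDiffAt_const (c := 0)).congr_of_eventuallyEq ?_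
      have hopen : IsOpen {z : E × T | -z.2 ∉ L} :=
        hL.isClosed.isOpen_compl.preimage continuous_snd.neg
      filter_upwards [hopen.mem_nhds ht] with z hz
      rw [hχL _ hz, zero_smul]
  -- The integral is the value at `0` of the convolution of the indicator of `K` with a reflected,
  -- cut-off `g`, and convolutions are known to depend smoothly on parameters.
  have hconv := contDiffOn_convolution_right_with_param_comp (μ := μ)
    (ContinuousLinearMap.lsmul ℝ ℝ) (v := fun _ : E ↦ (0 : T)) (f := K.indicator fun _ ↦ (1 : ℝ))
    (g := fun x t ↦ χ (-t) • g (x, -t)) contDiffOn_const hs hL.neg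
    (fun x t _ ht ↦ by rw [hχL _ ht, zero_smul])
    ((locallyIntegrable_const 1).indicator hK.measurableSet) hχg
  refine (hconv.contDiffAt (hs.mem_nhds (hxs rfl))).congr_of_eventuallyEq (.of_forall fun x ↦ ?_)
  dsimp only
  rw [convolution_def, ← integral_indicator hK.measurableSet]
  congr 1 with t
  by_cases ht : t ∈ K
  · simp [ht, (hχK.self_of_nhdsSet t ht : χ t = 1)]
  · simp [ht]

theorem exists_contDiffAt_eq_smul_of_hyperplane [CompleteSpace G] {f : E → G}
    {A : E →L[ℝ] ℝ} (hA : A ≠ 0) (hx₀ : A x₀ = 0)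
    (hf : ∀ᶠ x in 𝓝 x₀, ContDiffAt ℝ (n + 1) f x) (hf0 : ∀ᶠ x in 𝓝 x₀, A x = 0 → f x = 0) :
    ∃ h : E → G, ∀ᶠ x in 𝓝 x₀, ContDiffAt ℝ n h x ∧ f x = A x • h x := by
  obtain ⟨v, hv⟩ : ∃ v, A v = 1 :=
    LinearMap.surjective (f := A.toLinearMap) (by exact_mod_cast hA) 1
  let γ : E × ℝ → E := fun z ↦ z.1 - A z.1 • v + z.2 • A z.1 • v
  have hγ : ContDiff ℝ n γ := by fun_prop
  have hγx₀ (t : ℝ) : γ (x₀, t) = x₀ := by simp [γ, hx₀]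
  have hsegment : ∀ᶠ x in 𝓝 x₀, ∀ t ∈ Icc (0 : ℝ) 1,
      ∀ᶠ y in 𝓝 (γ (x, t)), ContDiffAt ℝ (n + 1) f y :=
    isCompact_Icc.eventually_forall_of_forall_eventually fun t _ ↦
      hγ.continuous.tendsto' (x₀, t) x₀ (hγx₀ t) |>.eventually hf.eventually_nhds
  have hproj : ∀ᶠ x in 𝓝 x₀, f (γ (x, 0)) = 0 := by
    have hγ0 : Tendsto (fun x ↦ γ (x, 0)) (𝓝 x₀) (𝓝 x₀) :=
      (hγ.continuous.comp (by fun_prop)).tendsto' x₀ x₀ (hγx₀ 0)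
    filter_upwards [hγ0.eventually hf0] with x hx
    exact hx (by simp [γ, hv])
  refine ⟨fun x ↦ ∫ t in Icc (0 : ℝ) 1, fderiv ℝ f (γ (x, t)) v, ?_⟩
  filter_upwards [hsegment, hproj] with x hx hx0
  constructor
  · refine contDiffAt_setIntegral_of_isCompact (g := fun z ↦ fderiv ℝ f (γ z) v) isCompact_Icc
      fun t ht ↦ ?_
    filter_upwards [hγ.continuous.continuousAt.eventually (hx t ht)] with z hz
    exact (hz.fderiv_right_succ.comp z hγ.contDiffAt).clm_apply contDiffAt_const
  · have htaylor := map_add_eq_sum_add_integral_iteratedFDeriv (n := 0) (f := f)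
      (x := x - A x • v) (y := A x • v)
      fun t ht ↦ (hx t ht).self_of_nhds.of_le (by simp)
    have hfproj : f (x - A x • v) = 0 := by simpa [γ] using hx0
    simpa [γ, hfproj, integral_Icc_eq_integral_Ioc, intervalIntegral.integral_of_le,
      iteratedFDeriv_one_apply, integral_smul] using htaylor

theorem exists_openPartialHomeomorph_fderiv_apply_eq [CompleteSpace E] {m : WithTop ℕ∞}
    (hm : m ≠ 0) {F : E → ℝ} (hF : ∀ᶠ x in 𝓝 x₀, ContDiffAt ℝ m F x) (hF0 : F x₀ = 0)
    (hF' : fderiv ℝ F x₀ ≠ 0) :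
    ∃ e : OpenPartialHomeomorph E E, x₀ ∈ e.source ∧ e x₀ = 0 ∧
      (∀ᶠ x in 𝓝 x₀, ContDiffAt ℝ m e x) ∧ (∀ᶠ y in 𝓝 0, ContDiffAt ℝ m e.symm y) ∧
      ∀ x, fderiv ℝ F x₀ (e x) = F x := by
  set A := fderiv ℝ F x₀ with hA
  obtain ⟨v, hv⟩ : ∃ v, A v = 1 :=
    LinearMap.surjective (f := A.toLinearMap) (by exact_mod_cast hF') 1
  let Φ : E → E := fun x ↦ x - x₀ + (F x - A (x - x₀)) • v
  -- `Φ` replaces the coordinate `A` by `F`; both have derivative `A`, so `DΦ(x₀) = id`.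
  have hΦ0 : Φ x₀ = 0 := by simp [Φ, hF0]
  have hΦ : ∀ᶠ x in 𝓝 x₀, ContDiffAt ℝ m Φ x := by
    filter_upwards [hF] with x hx
    fun_prop
  have hΦ' : HasFDerivAt Φ (ContinuousLinearEquiv.refl ℝ E : E →L[ℝ] E) x₀ := by
    have hsub := (hasFDerivAt_id (𝕜 := ℝ) x₀).sub_const x₀
    have hFx₀ := (hF.self_of_nhds.differentiableAt hm).hasFDerivAt
    refine (hsub.add ((hFx₀.sub (A.hasFDerivAt.comp x₀ hsub)).smul_const v)).congr_fderiv ?_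
    ext w
    simp [hA]
  let e := hΦ.self_of_nhds.toOpenPartialHomeomorph Φ hΦ' hm
  have hx₀ : x₀ ∈ e.source := hΦ.self_of_nhds.mem_toOpenPartialHomeomorph_source hΦ' hm
  exact ⟨e, hx₀, hΦ0, hΦ, hΦ0 ▸ eventually_contDiffAt_openPartialHomeomorph_symm e hx₀ hΦ' hm hΦ,
    fun x ↦ show A (Φ x) = F x by simp [Φ, hv]⟩

theorem exists_contDiffAt_eq_smul_of_fderiv_ne_zero [CompleteSpace E] [CompleteSpace G]
    {F : E → ℝ} {f : E → G} (hF : ∀ᶠ x in 𝓝 x₀, ContDiffAt ℝ (n + 1) F x)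
    (hf : ∀ᶠ x in 𝓝 x₀, ContDiffAt ℝ (n + 1) f x) (hF0 : F x₀ = 0) (hF' : fderiv ℝ F x₀ ≠ 0)
    (hFf : ∀ᶠ x in 𝓝 x₀, F x = 0 → f x = 0) :
    ∃ h : E → G, ∀ᶠ x in 𝓝 x₀, ContDiffAt ℝ n h x ∧ f x = F x • h x := by
  obtain ⟨e, hx₀, he0, he, hesymm, hAe⟩ :=
    exists_openPartialHomeomorph_fderiv_apply_eq (by simp) hF hF0 hF'
  have hsymm : Tendsto e.symm (𝓝 0) (𝓝 x₀) := he0 ▸ e.tendsto_symm hx₀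
  have htarget : ∀ᶠ y in 𝓝 0, y ∈ e.target := e.open_target.mem_nhds (he0 ▸ e.map_source hx₀)
  have hf_symm : ∀ᶠ y in 𝓝 0, ContDiffAt ℝ (n + 1) (f ∘ e.symm) y := by
    filter_upwards [hesymm, hsymm.eventually hf] with y hey hfy
    exact hfy.comp y hey
  have hvanish : ∀ᶠ y in 𝓝 0, fderiv ℝ F x₀ y = 0 → (f ∘ e.symm) y = 0 := by
    filter_upwards [htarget, hsymm.eventually hFf] with y hy hFfy hAy
    exact hFfy (by rw [← hAe, e.right_inv hy, hAy])
  obtain ⟨h, hh⟩ := exists_contDiffAt_eq_smul_of_hyperplane hF' (map_zero _) hf_symm hvanish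
  have he_tendsto : Tendsto e (𝓝 x₀) (𝓝 0) := he0 ▸ (e.continuousAt hx₀).tendsto
  refine ⟨h ∘ e, ?_⟩
  filter_upwards [he, e.open_source.mem_nhds hx₀, he_tendsto.eventually hh]
    with x hex hx ⟨hhx, hfx⟩
  refine ⟨hhx.comp x (hex.of_le (by simp)), ?_⟩
  rwa [Function.comp_apply, e.left_inv hx, hAe] at hfx

variable [CompleteSpace E] {Y Y' : E → G}

theorem exists_contDiffAt_proportionality_factor
    (hY : ∀ᶠ x in 𝓝 x₀, ContDiffAt ℝ (n + 1) Y x)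
    (hY' : ∀ᶠ x in 𝓝 x₀, ContDiffAt ℝ (n + 1) Y' x) (hYx₀ : Y x₀ = 0)
    (hdY : fderiv ℝ Y x₀ ≠ 0) (hprop : ∀ᶠ x in 𝓝 x₀, ∃ l : ℝ, Y' x = l • Y x) :
    ∃ u : E → ℝ, ∀ᶠ x in 𝓝 x₀, ContDiffAt ℝ n u x ∧ Y' x = u x • Y x := by
  obtain ⟨v, hv⟩ : ∃ v, fderiv ℝ Y x₀ v ≠ 0 := DFunLike.ne_iff.1 hdY
  obtain ⟨φ, hφ⟩ := SeparatingDual.exists_ne_zero (R := ℝ) hv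
  have hcomp {Z : E → G} (hZ : ∀ᶠ x in 𝓝 x₀, ContDiffAt ℝ (n + 1) Z x) :
      ∀ᶠ x in 𝓝 x₀, ContDiffAt ℝ (n + 1) (φ ∘ Z) x := by
    filter_upwards [hZ] with x hx
    exact φ.contDiff.contDiffAt.comp x hx
  have hdφY : fderiv ℝ (φ ∘ Y) x₀ ≠ 0 := by
    rw [fderiv_comp x₀ φ.differentiableAt (hY.self_of_nhds.differentiableAt (by simp)), φ.fderiv]
    exact DFunLike.ne_iff.2 ⟨v, hφ⟩
  have hvanish : ∀ᶠ x in 𝓝 x₀, (φ ∘ Y) x = 0 → (φ ∘ Y') x = 0 := by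
    filter_upwards [hprop] with x ⟨l, hl⟩ hx
    rw [Function.comp_apply, hl, map_smul, ← Function.comp_apply (f := φ), hx, smul_zero]
  obtain ⟨u, hu⟩ := exists_contDiffAt_eq_smul_of_fderiv_ne_zero (hcomp hY) (hcomp hY')
    (by simp [hYx₀]) hdφY hvanish
  have hregular : ∀ᶠ x in 𝓝 x₀, φ (Y x) ≠ 0 → Y' x = u x • Y x := by
    filter_upwards [hu, hprop] with x ⟨_, hux⟩ ⟨l, hl⟩ hx
    have hlu : l = u x := mul_left_cancel₀ hx (by simpa [hl, mul_comm] using hux)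
    rw [hl, hlu]
  refine ⟨u, ?_⟩
  filter_upwards [hu, hY, hY', hregular.eventually_nhds,
    ((hcomp hY).self_of_nhds.continuousAt_fderiv (by simp)).eventually_ne hdφY]
    with x ⟨hux, _⟩ hYx hYx' hregx hdx
  exact ⟨hux, tendsto_nhds_unique_of_frequently_eq hYx'.continuousAt
    (hux.continuousAt.smul hYx.continuousAt)
    ((frequently_ne_of_fderiv_ne_zero hdx 0).mp hregx)⟩

theorem exists_contDiffAt_pos_proportionality_factor
    (hY : ∀ᶠ x in 𝓝 x₀, ContDiffAt ℝ (n + 1) Y x)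
    (hY' : ∀ᶠ x in 𝓝 x₀, ContDiffAt ℝ (n + 1) Y' x) (hYx₀ : Y x₀ = 0)
    (hdY : fderiv ℝ Y x₀ ≠ 0) (hdY' : fderiv ℝ Y' x₀ ≠ 0)
    (hprop : ∀ᶠ x in 𝓝 x₀, ∃ l : ℝ, 0 ≤ l ∧ Y' x = l • Y x) :
    ∃ u : E → ℝ, ∀ᶠ x in 𝓝 x₀, ContDiffAt ℝ n u x ∧ 0 < u x ∧ Y' x = u x • Y x := by
  obtain ⟨u, hu⟩ := exists_contDiffAt_proportionality_factor hY hY' hYx₀ hdY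
    (hprop.mono fun x ⟨l, _, hl⟩ ↦ ⟨l, hl⟩)
  have hu_cont : ContinuousAt u x₀ := hu.self_of_nhds.1.continuousAt
  have hu_nonneg : 0 ≤ u x₀ := by
    refine ge_of_tendsto_of_frequently hu_cont
      ((frequently_ne_of_fderiv_ne_zero hdY 0).mp ?_)
    filter_upwards [hu, hprop] with x ⟨_, hux⟩ ⟨l, hl, hlx⟩ hYx
    rwa [← smul_left_injective ℝ hYx (hlx.symm.trans hux)]
  have hu_ne : u x₀ ≠ 0 := by
    intro hux₀
    have hd := hasFDerivAt_smul_of_eq_zero hu_cont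
      (hY.self_of_nhds.differentiableAt (by simp)).hasFDerivAt hYx₀
    rw [hux₀, zero_smul] at hd
    exact hdY' (hd.congr_of_eventuallyEq (hu.mono fun x hx ↦ hx.2)).fderiv
  refine ⟨u, ?_⟩
  filter_upwards [hu, hu_cont.eventually_const_lt (hu_nonneg.lt_of_ne' hu_ne)]
    with x ⟨hux, hYx⟩ hpos
  exact ⟨hux, hpos, hYx⟩

theorem giroux_same_leaves_general {U : Set E} (hU : IsOpen U) (hx₀ : x₀ ∈ U)
    (hY : ContDiffOn ℝ (n + 1) Y U) (hY' : ContDiffOn ℝ (n + 1) Y' U)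
    (hYx₀ : Y x₀ = 0) (hdY : fderiv ℝ Y x₀ ≠ 0) (hdY' : fderiv ℝ Y' x₀ ≠ 0)
    (hprop : ∀ x ∈ U, ∃ l : ℝ, 0 ≤ l ∧ Y' x = l • Y x) :
    ∃ V : Set E, V ⊆ U ∧ IsOpen V ∧ x₀ ∈ V ∧
      ∃ u : E → ℝ, ContDiffOn ℝ n u V ∧ (∀ x ∈ V, 0 < u x) ∧ ∀ x ∈ V, Y' x = u x • Y x := by
  have hUx₀ : ∀ᶠ x in 𝓝 x₀, x ∈ U := hU.mem_nhds hx₀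
  obtain ⟨u, hu⟩ := exists_contDiffAt_pos_proportionality_factor
    (hUx₀.mono fun x hx ↦ hY.contDiffAt (hU.mem_nhds hx))
    (hUx₀.mono fun x hx ↦ hY'.contDiffAt (hU.mem_nhds hx)) hYx₀ hdY hdY' (hUx₀.mono hprop)
  obtain ⟨V, hV, hVopen, hx₀V⟩ := eventually_nhds_iff.1 (hUx₀.and hu)
  exact ⟨V, fun x hx ↦ (hV x hx).1, hVopen, hx₀V, u,
    fun x hx ↦ (hV x hx).2.1.contDiffWithinAt, fun x hx ↦ (hV x hx).2.2.1,
    fun x hx ↦ (hV x hx).2.2.2⟩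

end

theorem fderiv_ne_zero_of_div2_ne_zero {Y : (Fin 2 → ℝ) → Fin 2 → ℝ} {p : Fin 2 → ℝ}
    (hY : DifferentiableAt ℝ Y p) (hdiv : div2 Y p ≠ 0) : fderiv ℝ Y p ≠ 0 := by
  intro h
  have hcoord (i : Fin 2) : fderiv ℝ (fun q ↦ Y q i) p = 0 := by
    rw [fderiv_apply hY, h, ContinuousLinearMap.comp_zero]
  exact hdiv (by simp [div2, pd2, hcoord])

/-- Giroux's lemma (local version at a singularity): two vector fields on a neighborhood of
the origin with the same zeros (of nonzero divergence for both) which are positively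
proportional away from their zeros differ by multiplication by a positive smooth function
near the origin. Hence two singular foliations with the same leaves whose singularities
have nonzero divergence are equal. -/
theorem giroux_same_leaves (U : Set (Fin 2 → ℝ)) (hU : IsOpen U) (h0U : (0 : Fin 2 → ℝ) ∈ U)
    (Y Y' : (Fin 2 → ℝ) → Fin 2 → ℝ)
    (hY : ContDiffOn ℝ (⊤ : ℕ∞) Y U) (hY' : ContDiffOn ℝ (⊤ : ℕ∞) Y' U)
    (hzeros : ∀ p ∈ U, (Y p = 0 ↔ Y' p = 0))
    (h00 : Y 0 = 0)
    (hdiv : ∀ p ∈ U, Y p = 0 → div2 Y p ≠ 0 ∧ div2 Y' p ≠ 0)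
    (hprop : ∀ p ∈ U, Y p ≠ 0 → ∃ l : ℝ, 0 < l ∧ Y' p = l • Y p) :
    ∃ V : Set (Fin 2 → ℝ), V ⊆ U ∧ IsOpen V ∧ (0 : Fin 2 → ℝ) ∈ V ∧
      ∃ u : (Fin 2 → ℝ) → ℝ, ContDiffOn ℝ (⊤ : ℕ∞) u V ∧
        (∀ p ∈ V, 0 < u p) ∧ (∀ p ∈ V, Y' p = u p • Y p) := by
  have hdiff {Z : (Fin 2 → ℝ) → Fin 2 → ℝ} (hZ : ContDiffOn ℝ (⊤ : ℕ∞) Z U) :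
      DifferentiableAt ℝ Z 0 := (hZ.contDiffAt (hU.mem_nhds h0U)).differentiableAt (by simp)
  refine giroux_same_leaves_general (n := ⊤) hU h0U hY hY' h00
    (fderiv_ne_zero_of_div2_ne_zero (hdiff hY) (hdiv 0 h0U h00).1)
    (fderiv_ne_zero_of_div2_ne_zero (hdiff hY') (hdiv 0 h0U h00).2) fun p hp ↦ ?_
  by_cases hYp : Y p = 0
  · exact ⟨0, le_rfl, by simp [(hzeros p hp).1 hYp]⟩
  · exact (hprop p hp hYp).imp fun l hl ↦ ⟨hl.1.le, hl.2⟩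
end

section
/- Let u, W : ℝ² → ℝ and Y : ℝ² → ℝ² be smooth and suppose u(p)·div Y(p) − du_p(Y(p)) + W(p) > 0 for every p ∈ ℝ². Let γ : [0,1] → ℝ² be differentiable with γ'(t) = Y(γ(t)) for all t, and suppose u(γ(0)) < 0 < u(γ(1)). Then there exists τ ∈ (0,1) with u(γ(τ)) = 0, du_{γ(τ)}(Y(γ(τ))) ≥ 0, and W(γ(τ)) > 0. (Along a retrograde connection, going from the negative region to the positive region, there is a point of the dividing set where the time-derivative term β̇(Y) of the contact structure is strictly positive: the contact structure must rotate positively there.) -/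
open Set

theorem exists_eq_forall_mem_Ioc_lt_of_continuousOn {α β : Type*}
    [ConditionallyCompleteLinearOrder α] [TopologicalSpace α] [OrderTopology α] [DenselyOrdered α]
    [LinearOrder β] [TopologicalSpace β] [OrderClosedTopology β]
    {f : α → β} {a b : α} {y : β} (hab : a ≤ b) (hf : ContinuousOn f (Icc a b))
    (ha : f a ≤ y) (hb : y < f b) :
    ∃ c ∈ Ico a b, f c = y ∧ ∀ t ∈ Ioc c b, y < f t := by
  have exists_eq : ∀ s ∈ Icc a b, f s ≤ y → ∃ t ∈ Icc s b, f t = y := fun s hs hsy =>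
    intermediate_value_Icc hs.2 (hf.mono (Icc_subset_Icc_left hs.1)) ⟨hsy, hb.le⟩
  have compact_level : IsCompact (Icc a b ∩ f ⁻¹' {y}) :=
    isCompact_Icc.of_isClosed_subset
      (hf.preimage_isClosed_of_isClosed isClosed_Icc isClosed_singleton) inter_subset_left
  obtain ⟨c, ⟨hc, hcy⟩, hlast⟩ :=
    compact_level.exists_isGreatest (exists_eq a (left_mem_Icc.2 hab) ha)
  refine ⟨c, ⟨hc.1, hc.2.lt_of_ne ?_⟩, hcy, fun t ht => ?_⟩
  · rintro rfl
    exact hb.ne' hcy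
  · by_contra! hty
    obtain ⟨s, hs, hsy⟩ := exists_eq t ⟨hc.1.trans ht.1.le, ht.2⟩ hty
    have hsc : s ≤ c := hlast ⟨⟨hc.1.trans (ht.1.le.trans hs.1), hs.2⟩, hsy⟩
    exact (ht.1.trans_le hs.1).not_ge hsc

theorem hasDerivWithinAt_Ioi_nonneg_of_isLocalMinOn {f : ℝ → ℝ} {f' c : ℝ}
    (hmin : IsLocalMinOn f (Ioi c) c) (hf : HasDerivWithinAt f f' (Ioi c) c) : 0 ≤ f' := by
  have hone : (1 : ℝ) ∈ posTangentConeAt (Ioi c) c := by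
    simp [one_mem_posTangentConeAt_iff_mem_closure]
  simpa using hmin.hasFDerivWithinAt_nonneg hf.hasFDerivWithinAt hone

theorem exists_mem_Ioo_eq_and_rightDeriv_nonneg {f f' : ℝ → ℝ} {a b y : ℝ} (hab : a ≤ b)
    (hf : ContinuousOn f (Icc a b)) (hf' : ∀ t ∈ Ioo a b, HasDerivWithinAt f (f' t) (Ioi t) t)
    (ha : f a < y) (hb : y < f b) : ∃ c ∈ Ioo a b, f c = y ∧ 0 ≤ f' c := by
  obtain ⟨c, hc, hcy, hgt⟩ := exists_eq_forall_mem_Ioc_lt_of_continuousOn hab hf ha.le hb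
  have hac : a < c := hc.1.lt_of_ne (by rintro rfl; exact ha.ne hcy)
  have hmin : IsLocalMinOn f (Ioi c) c := by
    filter_upwards [Ioc_mem_nhdsGT hc.2] with t ht
    exact hcy.trans_le (hgt t ht).le
  exact ⟨c, ⟨hac, hc.2⟩, hcy,
    hasDerivWithinAt_Ioi_nonneg_of_isLocalMinOn hmin (hf' c ⟨hac, hc.2⟩)⟩

theorem crossing_lemma_core_general {E : Type*} [NormedAddCommGroup E] [NormedSpace ℝ E]
    {u W : E → ℝ} {Y : E → E} {γ : ℝ → E} {a b : ℝ} (hab : a ≤ b) (hu : Differentiable ℝ u)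
    (hcontact : ∀ p, u p = 0 → fderiv ℝ u p (Y p) < W p)
    (hγ : IsIntegralCurveOn γ (fun _ => Y) (Icc a b)) (ha : u (γ a) < 0) (hb : 0 < u (γ b)) :
    ∃ τ ∈ Ioo a b, u (γ τ) = 0 ∧ 0 ≤ fderiv ℝ u (γ τ) (Y (γ τ)) ∧ 0 < W (γ τ) := by
  have hderiv : ∀ t ∈ Ioo a b,
      HasDerivWithinAt (u ∘ γ) (fderiv ℝ u (γ t) (Y (γ t))) (Ioi t) t := fun t ht =>
    ((hu (γ t)).hasFDerivAt.comp_hasDerivAt t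
      ((hγ t (Ioo_subset_Icc_self ht)).hasDerivAt (Icc_mem_nhds ht.1 ht.2))).hasDerivWithinAt
  obtain ⟨τ, hτ, hzero, hnonneg⟩ := exists_mem_Ioo_eq_and_rightDeriv_nonneg hab
    (hu.continuous.comp_continuousOn hγ.continuousOn) hderiv ha hb
  exact ⟨τ, hτ, hzero, hnonneg, hnonneg.trans_lt (hcontact (γ τ) hzero)⟩

/-- Computational heart of Giroux's crossing lemma: if the contact condition (⋆)
`u·div Y − du(Y) + W > 0` holds (with `W` playing the role of `β̇(Y)`), then along an orbit
`γ` of `Y` going from the region `{u < 0}` to the region `{u > 0}` (a retrograde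
connection) there is a point of the dividing set (`u = 0`) where `du(Y) ≥ 0` and hence
`W > 0`: the contact structure must rotate positively there. -/
theorem crossing_lemma_core (u W : (Fin 2 → ℝ) → ℝ) (Y : (Fin 2 → ℝ) → Fin 2 → ℝ)
    (hu : ContDiff ℝ (⊤ : ℕ∞) u) (hW : ContDiff ℝ (⊤ : ℕ∞) W) (hY : ContDiff ℝ (⊤ : ℕ∞) Y)
    (hcontact : ∀ p, 0 < u p * div2 Y p - fderiv ℝ u p (Y p) + W p)
    (γ : ℝ → Fin 2 → ℝ) (hγ : ∀ t ∈ Set.Icc (0 : ℝ) 1, HasDerivAt γ (Y (γ t)) t)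
    (h0 : u (γ 0) < 0) (h1 : 0 < u (γ 1)) :
    ∃ τ ∈ Set.Ioo (0 : ℝ) 1, u (γ τ) = 0 ∧
      0 ≤ fderiv ℝ u (γ τ) (Y (γ τ)) ∧ 0 < W (γ τ) := by
  exact crossing_lemma_core_general zero_le_one (hu.differentiable (by simp))
    (fun p hp => by simpa [hp] using hcontact p) (fun t ht => (hγ t ht).hasDerivWithinAt) h0 h1
end
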